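/- arXiv:2203.13957 — 3 statements merged into one kernel-verified Lean document; each statement's English description precedes it below -/
import Mathlib

section
/- Fix an integer H ≥ 1, parameter values θ₀ < θ₁ in Θ, θ ∈ Θ, and constants λ₀, λ₁ ≥ 0. Define V_{θ,H}^H(x₁,…,x_H) = min{λ₀ f_{θ₀}^H(x₁,…,x_H), λ₁ f_{θ₁}^H(x₁,…,x_H)} and, recursively for n = H−1,…,1, V_{θ,n}^H(x₁,…,x_n) = min{λ₀ f_{θ₀}^n, λ₁ f_{θ₁}^n, f_θ^n + Σ_{x_{n+1}∈ℤ⁺} V_{θ,n+1}^H(x₁,…,x_{n+1})} (all evaluated at (x₁,…,x_n)). Define U_{θ,H}^H(s) = min{λ₀ g_{θ₀}^H(s), λ₁ g_{θ₁}^H(s)} and, recursively for n = H,…,2, U_{θ,n−1}^H(s) = min{λ₀ g_{θ₀}^{n−1}(s), λ₁ g_{θ₁}^{n−1}(s), g_θ^{n−1}(s) + 𝒥_n U_{θ,n}^H(s)}, where 𝒥_n U(s) = Σ_{x∈ℤ⁺} U(s+x) d_n(x,s) and d_n(x,s) = C₁(x) C_{n−1}(s)/C_n(s+x) (interpreted as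 0 when C_n(s+x) = 0). Then for every n = 1,…,H and every (x₁,…,x_n) ∈ (ℤ⁺)ⁿ with h_n(x₁,…,x_n) > 0, V_{θ,n}^H(x₁,…,x_n) = U_{θ,n}^H(s_n) · h_n(x₁,…,x_n)/C_n(s_n), where s_n = x₁+…+x_n. -/
/-!
Write `r(x) = h_n(x) / C_n(s_n) ≥ 0`. Since `0 ≤ h_n(x) ≤ C_n(s_n)`, the identity
`C_n(s_n) r(x) = h_n(x)` holds even when `C_n(s_n) = 0` (`Cfun_mul_ratio`), hence
`f_θ^n(x) = g_θ^n(s_n) r(x)`. Multiplication by `r(x) ≥ 0` commutes with `min`, and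
`r(x, y) = r(x) C_n(s_n) h(y) / C_{n+1}(s_n + y) = r(x) d_{n+1}(y, s_n)`, so the factor `r(x)` can
be pulled out of the series over the next observation, turning it into `𝒥_{n+1} U`. Backward
induction (`Vaux_eq`) then gives `V = U · r` at every point. Pulling the constant out
is legitimate for any series, as `tsum` in a division ring commutes with constant factors.
-/

open scoped BigOperators

/-- `b(θ) = log Σ_{x∈ℤ⁺} e^{θx} h(x)`, the log-partition function. -/
noncomputable def expFamilyB (h : ℕ → ℝ) (θ : ℝ) : ℝ :=
  Real.log (∑' x : ℕ, Real.exp (θ * x) * h x)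

/-- `C_n(s) = Σ_{x₁+…+x_n=s} ∏ h(x_i)`. -/
noncomputable def Cfun (h : ℕ → ℝ) (n s : ℕ) : ℝ :=
  ∑ x ∈ Finset.Nat.antidiagonalTuple n s, ∏ i, h (x i)

/-- `g_θ^n(s) = C_n(s) exp(θ s − n b(θ))`, the pmf of the sufficient statistic. -/
noncomputable def gsuff (h : ℕ → ℝ) (θ : ℝ) (n s : ℕ) : ℝ :=
  Cfun h n s * Real.exp (θ * s - n * expFamilyB h θ)

/-- `h_n(x₁,…,x_n) = ∏ h(x_i)`. -/
noncomputable def hjoint (h : ℕ → ℝ) (n : ℕ) (x : Fin n → ℕ) : ℝ :=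
  ∏ i, h (x i)

/-- `f_θ^n(x₁,…,x_n) = exp(θ s_n − n b(θ)) h_n(x₁,…,x_n)`, the joint pmf. -/
noncomputable def fjoint (h : ℕ → ℝ) (θ : ℝ) (n : ℕ) (x : Fin n → ℕ) : ℝ :=
  Real.exp (θ * (∑ i, (x i : ℝ)) - n * expFamilyB h θ) * hjoint h n x

/-- `d_n(x,s) = C₁(x) C_{n−1}(s) / C_n(s+x)` (`= 0` when `C_n(s+x) = 0`, by
division-by-zero convention). -/
noncomputable def dcoef (h : ℕ → ℝ) (n x s : ℕ) : ℝ :=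
  h x * Cfun h (n - 1) s / Cfun h n (s + x)

/-- `𝒥_n U(s) = Σ_{x∈ℤ⁺} U(s+x) d_n(x,s)`. -/
noncomputable def Jop (h : ℕ → ℝ) (n : ℕ) (U : ℕ → ℝ) (s : ℕ) : ℝ :=
  ∑' x : ℕ, U (s + x) * dcoef h n x s

/-- `V_{θ,n}^H` via backward recursion; the first argument is the "fuel" `m = H − n`,
so `Vaux … m n = V_{θ,n}^H` when `m = H − n` (in particular `Vaux … 0 H = V_{θ,H}^H`). -/
noncomputable def Vaux (h : ℕ → ℝ) (θ₀ θ₁ θ lam₀ lam₁ : ℝ) : ℕ → (n : ℕ) → (Fin n → ℕ) → ℝ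
  | 0, n, x => min (lam₀ * fjoint h θ₀ n x) (lam₁ * fjoint h θ₁ n x)
  | m + 1, n, x =>
      min (min (lam₀ * fjoint h θ₀ n x) (lam₁ * fjoint h θ₁ n x))
        (fjoint h θ n x + ∑' y : ℕ, Vaux h θ₀ θ₁ θ lam₀ lam₁ m (n + 1) (Fin.snoc x y))

/-- `U_{θ,n}^H` via backward recursion; the first argument is the "fuel" `m = H − n`,
so `Uaux … H m = U_{θ,H−m}^H` (in particular `Uaux … H 0 = U_{θ,H}^H`). -/
noncomputable def Uaux (h : ℕ → ℝ) (θ₀ θ₁ θ lam₀ lam₁ : ℝ) (H : ℕ) : ℕ → ℕ → ℝ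
  | 0, s => min (lam₀ * gsuff h θ₀ H s) (lam₁ * gsuff h θ₁ H s)
  | m + 1, s =>
      min (min (lam₀ * gsuff h θ₀ (H - (m + 1)) s) (lam₁ * gsuff h θ₁ (H - (m + 1)) s))
        (gsuff h θ (H - (m + 1)) s + Jop h (H - m) (Uaux h θ₀ θ₁ θ lam₀ lam₁ H m) s)

/-- `C_n(s_n)` is a sum of nonnegative terms, one of which is `h_n(x)`. -/
lemma hjoint_le_Cfun (h : ℕ → ℝ) (hpos : ∀ x, 0 ≤ h x) (n : ℕ) (x : Fin n → ℕ) :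
    hjoint h n x ≤ Cfun h n (∑ i, x i) :=
  Finset.single_le_sum (f := fun x : Fin n → ℕ => ∏ i, h (x i))
    (fun y _ => Finset.prod_nonneg fun i _ => hpos (y i))
    (Finset.Nat.mem_antidiagonalTuple.2 rfl)

/-- This also covers `C_n(s_n) = 0`, where the junk value of the quotient is harmless because
`h_n(x) = 0` as well. -/
lemma Cfun_mul_ratio (h : ℕ → ℝ) (hpos : ∀ x, 0 ≤ h x) (n : ℕ) (x : Fin n → ℕ) :
    Cfun h n (∑ i, x i) * (hjoint h n x / Cfun h n (∑ i, x i)) = hjoint h n x := by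
  have h0 : 0 ≤ hjoint h n x := Finset.prod_nonneg fun i _ => hpos (x i)
  have h1 := hjoint_le_Cfun h hpos n x
  rcases eq_or_ne (Cfun h n (∑ i, x i)) 0 with hC | hC
  · rw [hC, zero_mul]
    linarith
  · field_simp

lemma fjoint_eq_gsuff_mul_ratio (h : ℕ → ℝ) (hpos : ∀ x, 0 ≤ h x) (θ : ℝ) (n : ℕ)
    (x : Fin n → ℕ) :
    fjoint h θ n x
      = gsuff h θ n (∑ i, x i) * (hjoint h n x / Cfun h n (∑ i, x i)) := by
  rw [gsuff, mul_right_comm, Cfun_mul_ratio h hpos, fjoint]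
  push_cast
  ring

lemma hjoint_snoc (h : ℕ → ℝ) (n : ℕ) (x : Fin n → ℕ) (y : ℕ) :
    hjoint h (n + 1) (Fin.snoc x y : Fin (n + 1) → ℕ) = hjoint h n x * h y := by
  simp [hjoint, Fin.prod_univ_castSucc]

/-- The factorization with no positivity assumption on `h_n(x)`, so that the inductive hypothesis
applies to every term of the series over the next observation. -/
lemma Vaux_eq (h : ℕ → ℝ) (hpos : ∀ x, 0 ≤ h x) (θ₀ θ₁ θ lam₀ lam₁ : ℝ) (H m : ℕ) :
    ∀ n : ℕ, n + m = H → ∀ x : Fin n → ℕ,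
      Vaux h θ₀ θ₁ θ lam₀ lam₁ m n x =
        Uaux h θ₀ θ₁ θ lam₀ lam₁ H m (∑ i, x i) *
          (hjoint h n x / Cfun h n (∑ i, x i)) := by
  have ratio_nonneg : ∀ (n : ℕ) (x : Fin n → ℕ),
      0 ≤ hjoint h n x / Cfun h n (∑ i, x i) := fun n x => by
    have h0 : 0 ≤ hjoint h n x := Finset.prod_nonneg fun i _ => hpos (x i)
    exact div_nonneg h0 (h0.trans (hjoint_le_Cfun h hpos n x))
  induction m with
  | zero =>
    intro n hn x
    obtain rfl : n = H := by omega
    rw [Vaux, Uaux, fjoint_eq_gsuff_mul_ratio h hpos, fjoint_eq_gsuff_mul_ratio h hpos,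
      min_mul_of_nonneg _ _ (ratio_nonneg n x), mul_assoc, mul_assoc]
  | succ m ih =>
    intro n hn x
    have e1 : H - (m + 1) = n := by omega
    have e2 : H - m = n + 1 := by omega
    have series : (∑' y : ℕ, Vaux h θ₀ θ₁ θ lam₀ lam₁ m (n + 1) (Fin.snoc x y))
        = Jop h (n + 1) (Uaux h θ₀ θ₁ θ lam₀ lam₁ H m) (∑ i, x i) *
          (hjoint h n x / Cfun h n (∑ i, x i)) := by
      rw [Jop, ← tsum_mul_right]
      refine tsum_congr fun y => ?_
      have hs : ∑ i, (Fin.snoc x y : Fin (n + 1) → ℕ) i = ∑ i, x i + y := by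
        simp [Fin.sum_univ_castSucc]
      rw [ih (n + 1) (by omega), hs, hjoint_snoc, dcoef, Nat.add_sub_cancel]
      nth_rewrite 1 [← Cfun_mul_ratio h hpos n x]
      ring
    rw [Vaux, Uaux, e1, e2, series, fjoint_eq_gsuff_mul_ratio h hpos,
      fjoint_eq_gsuff_mul_ratio h hpos, fjoint_eq_gsuff_mul_ratio h hpos,
      min_mul_of_nonneg _ _ (ratio_nonneg n x), min_mul_of_nonneg _ _ (ratio_nonneg n x),
      mul_assoc, mul_assoc, add_mul]

/-- **Proposition 1.** For `1 ≤ n ≤ H` and any `(x₁,…,x_n)` with `h_n(x₁,…,x_n) > 0`,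
`V_{θ,n}^H(x₁,…,x_n) = U_{θ,n}^H(s_n) · h_n(x₁,…,x_n)/C_n(s_n)` where `s_n = x₁+…+x_n`. -/
theorem stmt_0 (h : ℕ → ℝ) (hpos : ∀ x, 0 ≤ h x)
    (θ₀ θ₁ θ : ℝ)
    (hθ₀ : Summable fun x : ℕ => Real.exp (θ₀ * x) * h x)
    (hθ₁ : Summable fun x : ℕ => Real.exp (θ₁ * x) * h x)
    (hθ : Summable fun x : ℕ => Real.exp (θ * x) * h x)
    (hlt : θ₀ < θ₁)
    (lam₀ lam₁ : ℝ) (hlam₀ : 0 ≤ lam₀) (hlam₁ : 0 ≤ lam₁)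
    (H : ℕ) (hH : 1 ≤ H) :
    ∀ n : ℕ, 1 ≤ n → n ≤ H → ∀ x : Fin n → ℕ, 0 < hjoint h n x →
      Vaux h θ₀ θ₁ θ lam₀ lam₁ (H - n) n x =
        Uaux h θ₀ θ₁ θ lam₀ lam₁ H (H - n) (∑ i, x i) * hjoint h n x / Cfun h n (∑ i, x i) := by
  intro n _ hn x _
  rw [mul_div_assoc]
  exact Vaux_eq h hpos θ₀ θ₁ θ lam₀ lam₁ H (H - n) n (by omega) x
end

section
/- Let θ₀ < θ < θ₁ be in Θ, λ₀, λ₁ > 0, n ≥ 1, and let W : ℤ⁺ → [0,∞) be any nonnegative function. Define the stopping indicator ψ_n(s) = 1 if min{λ₀ g_{θ₀}^n(s), λ₁ g_{θ₁}^n(s)} ≤ g_θ^n(s) + W(s) and ψ_n(s) = 0 otherwise. Let A_n(λ₁, θ₁, θ) be the smallest integer greater than or equal to −log(λ₁)/(θ₁ − θ) + n (b(θ₁) − b(θ))/(θ₁ − θ) and B_n(λ₀, θ₀, θ) the largest integer less than or equal to log(λ₀)/(θ − θ₀) + n (b(θ) − b(θ₀))/(θ − θ₀). Then {s ∈ ℤ⁺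 : ψ_n(s) = 0} ⊆ {s ∈ ℤ⁺ : A_n(λ₁, θ₁, θ) ≤ s ≤ B_n(λ₀, θ₀, θ)}; in particular the continuation region at stage n is a finite set. -/
/-!
On the continuation region both `λ₀ g_{θ₀}^n(s)` and `λ₁ g_{θ₁}^n(s)` exceed `g_θ^n(s) + W(s)`, hence
exceed `g_θ^n(s)` because `W ≥ 0`. The likelihood ratios within an exponential family are
log-affine in `s`, so taking logarithms (`log_lt_of_gsuff_lt`) and dividing by `θ₁ - θ > 0`, resp.
`θ - θ₀ > 0`, gives the lower and the upper bound on `s`. The upper bound yields finiteness.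
-/

open scoped BigOperators

/-- Taking logarithms in `g_θ^n(s) < λ g_η^n(s)`: the common factor `C_n(s) ≥ 0` is nonzero, since
otherwise both sides vanish, so it cancels and an affine inequality in `s` is left. -/
lemma log_lt_of_gsuff_lt (h : ℕ → ℝ) (hpos : ∀ x, 0 ≤ h x) (θ η lam : ℝ) (hlam : 0 < lam)
    (n s : ℕ) (hlt : gsuff h θ n s < lam * gsuff h η n s) :
    θ * s - n * expFamilyB h θ < Real.log lam + (η * s - n * expFamilyB h η) := by
  have hC : 0 ≤ Cfun h n s :=
    Finset.sum_nonneg fun x _ => Finset.prod_nonneg fun i _ => hpos (x i)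
  unfold gsuff at hlt
  rw [mul_left_comm] at hlt
  have hexp := lt_of_mul_lt_mul_left hlt hC
  rwa [← Real.exp_lt_exp, Real.exp_add, Real.exp_log hlam]

/-- For `θ₀ < θ < θ₁`, `λ₀, λ₁ > 0`, any `n ≥ 1` and any nonnegative `W`,
the continuation region `{s : ψ_n(s) = 0}` of the stopping rule
`ψ_n(s) = I{min{λ₀g_{θ₀}^n(s), λ₁g_{θ₁}^n(s)} ≤ g_θ^n(s) + W(s)}` is contained in the
interval `{s : A_n(λ₁,θ₁,θ) ≤ s ≤ B_n(λ₀,θ₀,θ)}`, where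
`A_n = ⌈−log λ₁/(θ₁−θ) + n(b(θ₁)−b(θ))/(θ₁−θ)⌉` and
`B_n = ⌊log λ₀/(θ−θ₀) + n(b(θ)−b(θ₀))/(θ−θ₀)⌋`; in particular it is finite. -/
theorem stmt_5 (h : ℕ → ℝ) (hpos : ∀ x, 0 ≤ h x)
    (θ₀ θ θ₁ : ℝ)
    (hθ₀ : Summable fun x : ℕ => Real.exp (θ₀ * x) * h x)
    (hθ : Summable fun x : ℕ => Real.exp (θ * x) * h x)
    (hθ₁ : Summable fun x : ℕ => Real.exp (θ₁ * x) * h x)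
    (hlt₀ : θ₀ < θ) (hlt₁ : θ < θ₁)
    (lam₀ lam₁ : ℝ) (hlam₀ : 0 < lam₀) (hlam₁ : 0 < lam₁)
    (n : ℕ) (hn : 1 ≤ n)
    (W : ℕ → ℝ) (hW : ∀ s, 0 ≤ W s) :
    {s : ℕ | ¬ (min (lam₀ * gsuff h θ₀ n s) (lam₁ * gsuff h θ₁ n s) ≤ gsuff h θ n s + W s)} ⊆
      {s : ℕ | ⌈-Real.log lam₁ / (θ₁ - θ) +
          n * (expFamilyB h θ₁ - expFamilyB h θ) / (θ₁ - θ)⌉ ≤ (s : ℤ) ∧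
        (s : ℤ) ≤ ⌊Real.log lam₀ / (θ - θ₀) +
          n * (expFamilyB h θ - expFamilyB h θ₀) / (θ - θ₀)⌋} ∧
    Set.Finite {s : ℕ |
      ¬ (min (lam₀ * gsuff h θ₀ n s) (lam₁ * gsuff h θ₁ n s) ≤ gsuff h θ n s + W s)} := by
  have hsub : {s : ℕ | ¬ (min (lam₀ * gsuff h θ₀ n s) (lam₁ * gsuff h θ₁ n s)
        ≤ gsuff h θ n s + W s)} ⊆
      {s : ℕ | ⌈-Real.log lam₁ / (θ₁ - θ) +
          n * (expFamilyB h θ₁ - expFamilyB h θ) / (θ₁ - θ)⌉ ≤ (s : ℤ) ∧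
        (s : ℤ) ≤ ⌊Real.log lam₀ / (θ - θ₀) +
          n * (expFamilyB h θ - expFamilyB h θ₀) / (θ - θ₀)⌋} := by
    intro s hs
    obtain ⟨hs₀, hs₁⟩ := lt_min_iff.mp (not_le.mp hs)
    have hWs := hW s
    have h₀ := log_lt_of_gsuff_lt h hpos θ θ₀ lam₀ hlam₀ n s (by linarith)
    have h₁ := log_lt_of_gsuff_lt h hpos θ θ₁ lam₁ hlam₁ n s (by linarith)
    refine ⟨Int.ceil_le.mpr ?_, Int.le_floor.mpr ?_⟩
    · rw [← add_div, div_le_iff₀ (sub_pos.mpr hlt₁)]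
      push_cast
      linarith
    · rw [← add_div, le_div_iff₀ (sub_pos.mpr hlt₀)]
      push_cast
      linarith
  refine ⟨hsub, (Set.finite_Iic (⌊Real.log lam₀ / (θ - θ₀) +
    n * (expFamilyB h θ - expFamilyB h θ₀) / (θ - θ₀)⌋.toNat)).subset fun s hs => ?_⟩
  have hle := (hsub hs).2
  simp only [Set.mem_Iic]
  omega
end

section
/- Let θ₀ < θ < θ₁ be in Θ, λ₀, λ₁ > 0, and assume b is twice differentiable with b'' > 0 on [θ₀, θ₁]. Let D = (b(θ₁) − b(θ))/(θ₁ − θ) − (b(θ) − b(θ₀))/(θ − θ₀) (which is strictly positive). If n > (log(λ₀)/(θ − θ₀) + log(λ₁)/(θ₁ − θ))/D, then for every s ∈ ℤ⁺ one has min{λ₀ g_{θ₀}^n(s), λ₁ g_{θ₁}^n(s)} ≤ g_θ^n(s) + W(s) for every nonnegative W : ℤ⁺ → [0,∞); that is, the continuation region at stage n of the optimal stopping rule ψ_n(s) = I{min{λ₀ g_{θ₀}^n(s), λ₁ g_{θ₁}^n(s)} ≤ g_θ^n(s) + W(s)} is empty, so the optimal test in the modified Kiefer-Weiss problem takes at most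 H observations, where H is the largest integer less than or equal to (log(λ₀)/(θ − θ₀) + log(λ₁)/(θ₁ − θ))/D. -/
/-!
Strict positivity of `D`: by the mean value theorem the two difference quotients of `b` are `b' c`
and `b' d` with `θ₀ < c < θ < d < θ₁`, and `b'` is strictly increasing because `b'' > 0`.

Emptiness of the continuation region: the common factor `C_n(s) ≥ 0` plays no role, so it is enough
that `log λ₀ + θ₀ s - n b(θ₀) ≤ θ s - n b(θ)` or `log λ₁ + θ₁ s - n b(θ₁) ≤ θ s - n b(θ)`. If both
failed, dividing the first by `θ - θ₀` and the second by `θ₁ - θ` and adding would eliminate `s` and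
give `n D < log λ₀ / (θ - θ₀) + log λ₁ / (θ₁ - θ)`, contrary to the choice of `n`.
-/

open scoped BigOperators

theorem Cfun_nonneg {h : ℕ → ℝ} (hpos : ∀ x, 0 ≤ h x) (n s : ℕ) : 0 ≤ Cfun h n s :=
  Finset.sum_nonneg fun _ _ => Finset.prod_nonneg fun _ _ => hpos _

theorem mul_gsuff_le {h : ℕ → ℝ} (hpos : ∀ x, 0 ≤ h x) {α θ lam : ℝ} (hlam : 0 < lam) {n s : ℕ}
    (hle : Real.log lam + (α * s - n * expFamilyB h α) ≤ θ * s - n * expFamilyB h θ) :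
    lam * gsuff h α n s ≤ gsuff h θ n s := by
  have h1 := Real.exp_le_exp.2 hle
  rw [Real.exp_add, Real.exp_log hlam] at h1
  unfold gsuff
  rw [mul_left_comm]
  exact mul_le_mul_of_nonneg_left h1 (Cfun_nonneg hpos n s)

/-- Difference quotients of a function with positive second derivative increase strictly. -/
theorem slope_gap_pos {f f' f'' : ℝ → ℝ} {a x c : ℝ} (hax : a < x) (hxc : x < c)
    (hd1 : ∀ t ∈ Set.Icc a c, HasDerivWithinAt f (f' t) (Set.Icc a c) t)
    (hd2 : ∀ t ∈ Set.Icc a c, HasDerivWithinAt f' (f'' t) (Set.Icc a c) t)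
    (hpos : ∀ t ∈ Set.Icc a c, 0 < f'' t) :
    0 < (f c - f x) / (c - x) - (f x - f a) / (x - a) := by
  have hcont : ContinuousOn f (Set.Icc a c) := fun t ht => (hd1 t ht).continuousWithinAt
  have hderiv : ∀ t ∈ Set.Ioo a c, HasDerivAt f (f' t) t := fun t ht =>
    (hd1 t (Set.Ioo_subset_Icc_self ht)).hasDerivAt (Icc_mem_nhds ht.1 ht.2)
  have hmono : StrictMonoOn f' (Set.Icc a c) := by
    refine strictMonoOn_of_deriv_pos (convex_Icc a c)
      (fun t ht => (hd2 t ht).continuousWithinAt) fun t ht => ?_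
    rw [interior_Icc] at ht
    have ht' := Set.Ioo_subset_Icc_self ht
    rw [((hd2 t ht').hasDerivAt (Icc_mem_nhds ht.1 ht.2)).deriv]
    exact hpos t ht'
  obtain ⟨p, hp, hpe⟩ := exists_hasDerivAt_eq_slope f f' hax
    (hcont.mono (Set.Icc_subset_Icc_right hxc.le))
    fun t ht => hderiv t ⟨ht.1, ht.2.trans hxc⟩
  obtain ⟨q, hq, hqe⟩ := exists_hasDerivAt_eq_slope f f' hxc
    (hcont.mono (Set.Icc_subset_Icc_left hax.le))
    fun t ht => hderiv t ⟨hax.trans ht.1, ht.2⟩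
  rw [← hpe, ← hqe, sub_pos]
  exact hmono ⟨hp.1.le, (hp.2.trans hxc).le⟩ ⟨(hax.trans hq.1).le, hq.2.le⟩ (hp.2.trans hq.1)

/-- With `b = expFamilyB h` twice differentiable and strictly convex on
`[θ₀, θ₁]`, the slope difference `D = (b(θ₁)−b(θ))/(θ₁−θ) − (b(θ)−b(θ₀))/(θ−θ₀)` is
strictly positive, and if `n > (log λ₀/(θ−θ₀) + log λ₁/(θ₁−θ))/D` then for every `s` and
every nonnegative `W`, `min{λ₀g_{θ₀}^n(s), λ₁g_{θ₁}^n(s)} ≤ g_θ^n(s) + W(s)`: the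
continuation region at stage `n` is empty, so the optimal test in the modified
Kiefer-Weiss problem takes at most `H = ⌊(log λ₀/(θ−θ₀) + log λ₁/(θ₁−θ))/D⌋` observations. -/
theorem stmt_7 (h : ℕ → ℝ) (hpos : ∀ x, 0 ≤ h x)
    (θ₀ θ θ₁ : ℝ)
    (hθ₀ : Summable fun x : ℕ => Real.exp (θ₀ * x) * h x)
    (hθ : Summable fun x : ℕ => Real.exp (θ * x) * h x)
    (hθ₁ : Summable fun x : ℕ => Real.exp (θ₁ * x) * h x)
    (hlt₀ : θ₀ < θ) (hlt₁ : θ < θ₁)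
    (lam₀ lam₁ : ℝ) (hlam₀ : 0 < lam₀) (hlam₁ : 0 < lam₁)
    (b' b'' : ℝ → ℝ)
    (hd1 : ∀ ϑ ∈ Set.Icc θ₀ θ₁, HasDerivWithinAt (expFamilyB h) (b' ϑ) (Set.Icc θ₀ θ₁) ϑ)
    (hd2 : ∀ ϑ ∈ Set.Icc θ₀ θ₁, HasDerivWithinAt b' (b'' ϑ) (Set.Icc θ₀ θ₁) ϑ)
    (hconv : ∀ ϑ ∈ Set.Icc θ₀ θ₁, 0 < b'' ϑ) :
    0 < (expFamilyB h θ₁ - expFamilyB h θ) / (θ₁ - θ) -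
        (expFamilyB h θ - expFamilyB h θ₀) / (θ - θ₀) ∧
    ∀ n : ℕ,
      (n : ℝ) > (Real.log lam₀ / (θ - θ₀) + Real.log lam₁ / (θ₁ - θ)) /
          ((expFamilyB h θ₁ - expFamilyB h θ) / (θ₁ - θ) -
            (expFamilyB h θ - expFamilyB h θ₀) / (θ - θ₀)) →
      ∀ W : ℕ → ℝ, (∀ s, 0 ≤ W s) → ∀ s : ℕ,
        min (lam₀ * gsuff h θ₀ n s) (lam₁ * gsuff h θ₁ n s) ≤ gsuff h θ n s + W s := by
  have hD := slope_gap_pos hlt₀ hlt₁ hd1 hd2 hconv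
  refine ⟨hD, fun n hn W hW s => ?_⟩
  suffices hmin : min (lam₀ * gsuff h θ₀ n s) (lam₁ * gsuff h θ₁ n s) ≤ gsuff h θ n s by
    linarith [hW s]
  rw [gt_iff_lt, div_lt_iff₀ hD] at hn
  have hu : 0 < θ - θ₀ := sub_pos.2 hlt₀
  have hv : 0 < θ₁ - θ := sub_pos.2 hlt₁
  by_cases h0 : Real.log lam₀ + (θ₀ * s - n * expFamilyB h θ₀) ≤ θ * s - n * expFamilyB h θ
  · exact (min_le_left _ _).trans (mul_gsuff_le hpos hlam₀ h0)
  refine (min_le_right _ _).trans (mul_gsuff_le hpos hlam₁ ?_)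
  by_contra h1
  rw [not_le] at h0 h1
  have e0 : s - n * ((expFamilyB h θ - expFamilyB h θ₀) / (θ - θ₀))
      < Real.log lam₀ / (θ - θ₀) := by
    rw [lt_div_iff₀ hu, sub_mul, mul_assoc, div_mul_cancel₀ _ hu.ne']
    linarith
  have e1 : n * ((expFamilyB h θ₁ - expFamilyB h θ) / (θ₁ - θ)) - s
      < Real.log lam₁ / (θ₁ - θ) := by
    rw [lt_div_iff₀ hv, sub_mul, mul_assoc, div_mul_cancel₀ _ hv.ne']
    linarith
  rw [mul_sub] at hn
  linarith
end
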